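/- arXiv:2305.16114 — 6 statements merged into one kernel-verified Lean document; each statement's English description precedes it below -/
import Mathlib

section
/- For every natural number k and every real number m > 0, the sequence a_n := Σ_{j=1}^{n} j^k · (m/n)^{k+1} · (1 − m/n)^{j} converges as n → ∞, and its limit equals k! · (1 − e^{−m} · Σ_{i=0}^{k} m^i / i!). -/
/-!
Write `p = m / n`, `q = 1 - p` and `S k = ∑ j ∈ [1, n], j ^ k * p ^ (k + 1) * q ^ j`. Telescoping
`(j + 1) ^ k * q ^ (j + 1) - j ^ k * q ^ j` and expanding `(j + 1) ^ k` by the binomial theorem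
gives the exact recurrence
`S k = q * ∑ i < k, k.choose i * p ^ (k - 1 - i) * S i + q * p ^ k - ((n + 1) * p) ^ k * q ^ (n + 1)`
(`powSum_recurrence`). As `n → ∞` we have `p → 0`, `q → 1`, `(n + 1) * p → m` and
`q ^ (n + 1) → exp (-m)`, so by strong induction only the term `i = k - 1` of the sum survives, and
the limits satisfy `L 0 = 1 - exp (-m)` and `L (k + 1) = (k + 1) * L k - m ^ (k + 1) * exp (-m)`.
This is the recurrence of the lower incomplete gamma function `γ(k + 1, m)`, which the closed form
also satisfies.
-/

open Filter Finset

/-- The Abel summation identity for `∑ j ^ k * q ^ j`, before scaling by a power of `1 - q`. -/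
lemma powSum_abel (k n : ℕ) (p : ℝ) :
    p * ∑ j ∈ Icc 1 n, (j : ℝ) ^ k * (1 - p) ^ j =
      (1 - p) * ∑ i ∈ range k, (k.choose i : ℝ) * ∑ j ∈ Icc 1 n, (j : ℝ) ^ i * (1 - p) ^ j
        + (1 - p) - ((n : ℝ) + 1) ^ k * (1 - p) ^ (n + 1) := by
  induction n with
  | zero => simp
  | succ n ih =>
    have hb : ((n : ℝ) + 1 + 1) ^ k = ∑ i ∈ range k, (k.choose i : ℝ) * ((n : ℝ) + 1) ^ i
        + ((n : ℝ) + 1) ^ k := by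
      rw [add_pow ((n : ℝ) + 1) 1 k, sum_range_succ]
      simp [mul_comm]
    simp only [sum_Icc_succ_top (Nat.le_add_left 1 n), mul_add, sum_add_distrib, ← mul_assoc,
      ← sum_mul] at ih ⊢
    push_cast
    rw [hb]
    linear_combination ih

lemma powSum_recurrence (k n : ℕ) (p : ℝ) :
    ∑ j ∈ Icc 1 n, (j : ℝ) ^ k * p ^ (k + 1) * (1 - p) ^ j =
      (1 - p) * ∑ i ∈ range k, (k.choose i : ℝ) * (p ^ (k - 1 - i) *
          ∑ j ∈ Icc 1 n, (j : ℝ) ^ i * p ^ (i + 1) * (1 - p) ^ j)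
        + (1 - p) * p ^ k - (((n : ℝ) + 1) * p) ^ k * (1 - p) ^ (n + 1) := by
  have hs : ∀ i, ∑ j ∈ Icc 1 n, (j : ℝ) ^ i * p ^ (i + 1) * (1 - p) ^ j =
      p ^ (i + 1) * ∑ j ∈ Icc 1 n, (j : ℝ) ^ i * (1 - p) ^ j := by
    intro i
    rw [mul_sum]
    exact sum_congr rfl fun j _ => by ring
  have hr : ∑ i ∈ range k, (k.choose i : ℝ) * (p ^ (k - 1 - i) *
        ∑ j ∈ Icc 1 n, (j : ℝ) ^ i * p ^ (i + 1) * (1 - p) ^ j) =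
      p ^ k * ∑ i ∈ range k, (k.choose i : ℝ) * ∑ j ∈ Icc 1 n, (j : ℝ) ^ i * (1 - p) ^ j := by
    rw [mul_sum]
    refine sum_congr rfl fun i hi => ?_
    have hik : k = k - 1 - i + (i + 1) := by have := mem_range.mp hi; omega
    have hp : p ^ k = p ^ (k - 1 - i) * p ^ (i + 1) := by rw [← pow_add, ← hik]
    rw [hs, hp]
    ring
  rw [hr, hs, mul_pow]
  linear_combination p ^ k * powSum_abel k n p

/-- For every natural number `k` and every real `m > 0`, the sequence
`a_n := Σ_{j=1}^{n} j^k (m/n)^{k+1} (1 − m/n)^j` converges as `n → ∞` to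
`k! · (1 − e^{−m} Σ_{i=0}^{k} m^i / i!)`. -/
theorem stmt2 (k : ℕ) (m : ℝ) (hm : 0 < m) :
    Filter.Tendsto
      (fun n : ℕ => ∑ j ∈ Finset.Icc 1 n, (j : ℝ) ^ k * (m / n) ^ (k + 1) * (1 - m / n) ^ j)
      Filter.atTop
      (nhds ((k.factorial : ℝ) *
        (1 - Real.exp (-m) * ∑ i ∈ Finset.range (k + 1), m ^ i / (i.factorial : ℝ)))) := by
  have hp : Tendsto (fun n : ℕ => m / (n : ℝ)) atTop (nhds 0) :=
    tendsto_const_div_atTop_nhds_zero_nat m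
  have hq : Tendsto (fun n : ℕ => 1 - m / (n : ℝ)) atTop (nhds 1) := by
    simpa using hp.const_sub 1
  have hnp : Tendsto (fun n : ℕ => ((n : ℝ) + 1) * (m / n)) atTop (nhds m) := by
    have h : Tendsto (fun n : ℕ => m + m / (n : ℝ)) atTop (nhds m) := by
      simpa using hp.const_add m
    refine h.congr' ?_
    filter_upwards [eventually_ne_atTop 0] with n hn
    have : (n : ℝ) ≠ 0 := by exact_mod_cast hn
    field_simp
  have hqn : Tendsto (fun n : ℕ => (1 - m / (n : ℝ)) ^ (n + 1)) atTop
      (nhds (Real.exp (-m))) := by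
    have h := (Real.tendsto_one_add_div_pow_exp (-m)).mul hq
    rw [mul_one] at h
    refine h.congr fun n => ?_
    rw [pow_succ, neg_div, ← sub_eq_add_neg]
  induction k using Nat.strong_induction_on with
  | _ k ih =>
  simp only [powSum_recurrence k]
  cases k with
  | zero =>
    simpa using hq.sub hqn
  | succ k =>
    simp only [sum_range_succ _ k, Nat.add_sub_cancel]
    -- The terms with `i < k` carry a positive power of `p` and vanish in the limit.
    have h0 : Tendsto (fun n : ℕ => ∑ i ∈ range k, ((k + 1).choose i : ℝ) *
        ((m / (n : ℝ)) ^ (k - i) *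
          ∑ j ∈ Icc 1 n, (j : ℝ) ^ i * (m / n) ^ (i + 1) * (1 - m / n) ^ j))
        atTop (nhds 0) := by
      rw [← sum_const_zero (s := range k)]
      refine tendsto_finsetSum _ fun i hi => ?_
      have hik := mem_range.mp hi
      have h := ((hp.pow (k - i)).mul (ih i (by omega))).const_mul ((k + 1).choose i : ℝ)
      rwa [zero_pow (by omega), zero_mul, mul_zero] at h
    have h1 := ((hp.pow (k - k)).mul (ih k (by omega))).const_mul ((k + 1).choose k : ℝ)
    have h := ((hq.mul (h0.add h1)).add (hq.mul (hp.pow (k + 1)))).sub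
      ((hnp.pow (k + 1)).mul hqn)
    convert h using 2
    rw [sum_range_succ _ (k + 1), Nat.factorial_succ, Nat.choose_succ_self_right,
      zero_pow k.succ_ne_zero, Nat.sub_self]
    have hf : (k.factorial : ℝ) ≠ 0 := by exact_mod_cast k.factorial_ne_zero
    have hk : (k : ℝ) + 1 ≠ 0 := by positivity
    push_cast
    field_simp
    ring
end

section
/- For all integers k, q, m with 0 ≤ k < q ≤ m, the limit superior as n → ∞ of (1/n) · Σ_{j=q}^{n} C(j,k) · (m/n)^k · (1 − m/n)^{j−k} is at most 1/m. -/
/-!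
Once `n > m`, put `p = m / n ∈ (0, 1)`. Dropping to the full range `j ≥ k`, the sum is at most the
negative binomial series `∑_{i ≥ 0} C(i + k, k) p ^ k (1 - p) ^ i = p ^ k / p ^ (k + 1) = 1 / p`,
so the whole expression is at most `(1 / n) (n / m) = 1 / m` for every `n > m`.
-/

open Filter Finset

/-- Finite partial sums of the negative binomial series are at most its total `1 / p`. -/
lemma sum_choose_le_inv (k q n : ℕ) (hkq : k < q) (p : ℝ) (hp : 0 < p) (hp1 : p < 1) :
    ∑ j ∈ Finset.Icc q n, (j.choose k : ℝ) * p ^ k * (1 - p) ^ (j - k) ≤ 1 / p := by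
  have hr : 0 < 1 - p := by linarith
  have hnorm : ‖1 - p‖ < 1 := by
    rw [Real.norm_eq_abs, abs_of_pos hr]; linarith
  have hs := (hasSum_choose_mul_geometric_of_norm_lt_one k hnorm).mul_left (p ^ k)
  have hval : p ^ k * (1 / (1 - (1 - p)) ^ (k + 1)) = 1 / p := by
    rw [sub_sub_cancel]; field_simp; ring
  rw [hval] at hs
  have hinj : Set.InjOn (fun j => j - k) (Finset.Icc q n : Set ℕ) := by
    intro a ha b hb hab
    simp only [Finset.coe_Icc, Set.mem_Icc] at ha hb hab
    omega
  refine le_trans (le_of_eq ?_)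
    (sum_le_hasSum ((Finset.Icc q n).image fun j => j - k) (fun i _ => by positivity) hs)
  rw [Finset.sum_image hinj]
  refine Finset.sum_congr rfl fun j hj => ?_
  have hj' : j - k + k = j := by have := (Finset.mem_Icc.mp hj).1; omega
  rw [hj']
  ring

/-- For all integers `0 ≤ k < q ≤ m`, the limit superior as `n → ∞` of
`(1/n) · Σ_{j=q}^{n} C(j,k) (m/n)^k (1 − m/n)^{j−k}` is at most `1/m`. -/
theorem stmt3 (k q m : ℕ) (hkq : k < q) (hqm : q ≤ m) :
    Filter.limsup
      (fun n : ℕ => (1 / (n : ℝ)) * ∑ j ∈ Finset.Icc q n,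
        (j.choose k : ℝ) * ((m : ℝ) / n) ^ k * (1 - (m : ℝ) / n) ^ (j - k))
      Filter.atTop ≤ 1 / (m : ℝ) := by
  have hm : (0 : ℝ) < m := by exact_mod_cast (by omega : 0 < m)
  have hp1 : ∀ n : ℕ, m < n → (m : ℝ) / n < 1 := fun n hn => by
    have hmn : (m : ℝ) < n := by exact_mod_cast hn
    exact (div_lt_one (hm.trans hmn)).mpr hmn
  -- In `ℝ` the limsup is only meaningful given a lower bound, supplied here by nonnegativity.
  refine limsup_le_of_le (IsBoundedUnder.isCoboundedUnder_le ⟨0, ?_⟩) ?_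
  · rw [eventually_map]
    filter_upwards [eventually_gt_atTop m] with n hn
    have hr : 0 < 1 - (m : ℝ) / n := by linarith [hp1 n hn]
    exact mul_nonneg (by positivity) (Finset.sum_nonneg fun j _ => by positivity)
  · filter_upwards [eventually_gt_atTop m] with n hn
    have hn0 : (0 : ℝ) < n := by exact_mod_cast (by omega : 0 < n)
    calc _ ≤ (1 / (n : ℝ)) * (1 / ((m : ℝ) / n)) :=
          mul_le_mul_of_nonneg_left
            (sum_choose_le_inv k q n hkq _ (div_pos hm hn0) (hp1 n hn)) (by positivity)
      _ = 1 / (m : ℝ) := by field_simp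
end

section
/- For all integers q, m with 1 ≤ q ≤ m, the limit superior as n → ∞ of (1/n) · Σ_{j=q}^{n} Σ_{k=0}^{q−1} C(j,k) · (m/n)^k · (1 − m/n)^{j−k} is at most q/m. -/
/-!
The bound holds for every `n ≥ m`, not only in the limit. With `p = m / n ∈ (0, 1]`, the negative
binomial series `∑_{j ≥ k} C(j,k) (1 - p)^(j-k) = p^{-(k+1)}` bounds each partial sum
`∑_j C(j,k) p^k (1 - p)^(j-k)` by `1 / p = n / m`. Summing over the `q` values of `k` and dividing
by `n` gives `q / m`.
-/

open Filter Finset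

/-- Partial sums of the negative binomial series: for `0 < p ≤ 1`, the sum over all `j ≥ k`, which
is the expected number of `j` such that the first `j` trials have exactly `k` successes, equals
`1 / p`. The condition `k < q` ensures that `j - k` is a
genuine difference on the range of summation. -/
lemma sum_choose_mul_le {p : ℝ} (hp : 0 < p) (hp1 : p ≤ 1) {q k : ℕ} (n : ℕ) (hk : k < q) :
    ∑ j ∈ Finset.Icc q n, (j.choose k : ℝ) * p ^ k * (1 - p) ^ (j - k) ≤ 1 / p := by
  have h0 : 0 ≤ 1 - p := by linarith
  have hr : ‖1 - p‖ < 1 := by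
    rw [Real.norm_of_nonneg h0]; linarith
  have hs := (hasSum_choose_mul_geometric_of_norm_lt_one k hr).mul_left (p ^ k)
  have hinj : Set.InjOn (fun j => j - k) (Finset.Icc q n : Set ℕ) := by
    intro a ha b hb hab
    simp only [Finset.coe_Icc, Set.mem_Icc] at ha hb
    simp only at hab
    omega
  have hle := sum_le_hasSum ((Finset.Icc q n).image (fun j => j - k))
    (fun i _ => by positivity) hs
  rw [Finset.sum_image hinj] at hle
  calc _ = ∑ j ∈ Finset.Icc q n,
        p ^ k * (((j - k + k).choose k : ℝ) * (1 - p) ^ (j - k)) := by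
        refine Finset.sum_congr rfl fun j hj => ?_
        rw [Finset.mem_Icc] at hj
        rw [Nat.sub_add_cancel (by omega)]
        ring
    _ ≤ _ := hle
    _ = 1 / p := by
        rw [sub_sub_cancel]
        field_simp
        ring

/-- For all integers `1 ≤ q ≤ m`, the limit superior as `n → ∞` of
`(1/n) · Σ_{j=q}^{n} Σ_{k=0}^{q−1} C(j,k) (m/n)^k (1 − m/n)^{j−k}` is at most `q/m`. -/
theorem stmt4 (q m : ℕ) (hq : 1 ≤ q) (hqm : q ≤ m) :
    Filter.limsup
      (fun n : ℕ => (1 / (n : ℝ)) * ∑ j ∈ Finset.Icc q n, ∑ k ∈ Finset.range q,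
        (j.choose k : ℝ) * ((m : ℝ) / n) ^ k * (1 - (m : ℝ) / n) ^ (j - k))
      Filter.atTop ≤ (q : ℝ) / m := by
  have hm : (0 : ℝ) < m := by exact_mod_cast (by omega : 0 < m)
  have hp : ∀ n : ℕ, m ≤ n → 0 < (n : ℝ) ∧ 0 < (m : ℝ) / n ∧ (m : ℝ) / n ≤ 1 := by
    intro n hn
    have hmn : (m : ℝ) ≤ n := by exact_mod_cast hn
    have hn0 : (0 : ℝ) < n := hm.trans_le hmn
    exact ⟨hn0, div_pos hm hn0, (div_le_one hn0).2 hmn⟩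
  refine limsup_le_of_le ?_ ?_
  -- On `ℝ` the limsup is only meaningful given a lower bound; nonnegativity of the terms is one.
  · refine IsBoundedUnder.isCoboundedUnder_le ⟨0, ?_⟩
    rw [eventually_map]
    filter_upwards [eventually_ge_atTop m] with n hn
    have h0 : 0 ≤ 1 - (m : ℝ) / n := by linarith [(hp n hn).2.2]
    positivity
  · filter_upwards [eventually_ge_atTop m] with n hn
    obtain ⟨hn0, hpos, hle⟩ := hp n hn
    rw [Finset.sum_comm]
    calc _ ≤ (1 / (n : ℝ)) * ∑ k ∈ Finset.range q, 1 / ((m : ℝ) / n) := by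
          gcongr with k hk
          exact sum_choose_mul_le hpos hle n (Finset.mem_range.1 hk)
      _ = (q : ℝ) / m := by
          rw [Finset.sum_const, Finset.card_range, nsmul_eq_mul]
          field_simp
end

section
/- For all integers 1 ≤ q ≤ m, the limit inferior as n → ∞ of P(n,m,q) is at least 1 − q/m. -/
/-!
Put `p = m / n`, and let `B j k = C(j,k) p^k (1-p)^(j-k)` be the binomial weights. For fixed `k`,
the negative binomial series gives `∑_j B j k = 1 / p`, so that for `n ≥ m` the lower tails
`∑_{k<q} B j k`, summed over `0 ≤ j ≤ n`, contribute at most `q / p = q n / m`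
(`sum_binomial_weight_le`). The upper tails `∑_{k=q}^{j} B j k` for `0 ≤ j ≤ n` therefore add up to
at least `(n + 1) - q n / m`, and dividing by `n` shows that `P n m q ≥ 1 - q / m` holds for every
`n ≥ m`, not only in the limit. The bound `P n m q ≤ 1` makes the real-valued `liminf` meaningful.
-/

open Filter Finset

/-- `P n m q` is the probability that a uniformly random feature subspace of an
`n`-dimensional feature space contains at least `q` of the `m` effective features:
`P(n,m,q) = (1/n) · Σ_{j=q}^{n} Σ_{k=q}^{j} C(j,k) (m/n)^k (1 − m/n)^{j−k}`. -/
noncomputable def P (n m q : ℕ) : ℝ :=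
  (1 / (n : ℝ)) * ∑ j ∈ Finset.Icc q n, ∑ k ∈ Finset.Icc q j,
    (j.choose k : ℝ) * ((m : ℝ) / n) ^ k * (1 - (m : ℝ) / n) ^ (j - k)

/-- Summing the binomial weights at a fixed `k` over `j` gives a partial sum of the negative
binomial series `p ^ k * ∑ i, C(i+k,k) (1-p)^i`, whose terms are nonnegative and whose value is
`1 / p`. -/
lemma sum_binomial_weight_le (p : ℝ) (hp : 0 < p) (hp1 : p ≤ 1) (k N : ℕ) :
    ∑ j ∈ Finset.range N, (j.choose k : ℝ) * p ^ k * (1 - p) ^ (j - k) ≤ 1 / p := by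
  have hr : 0 ≤ 1 - p := by linarith
  have hnorm : ‖1 - p‖ < 1 := by
    rw [Real.norm_of_nonneg hr]
    linarith
  have hseries : ∑ i ∈ Finset.range N, ((i + k).choose k : ℝ) * (1 - p) ^ i
      ≤ 1 / p ^ (k + 1) := by
    have h := (summable_choose_mul_geometric_of_norm_lt_one k hnorm).sum_le_tsum
      (Finset.range N) (fun i _ => by positivity)
    rwa [tsum_choose_mul_geometric_of_norm_lt_one k hnorm, sub_sub_cancel] at h
  calc ∑ j ∈ Finset.range N, (j.choose k : ℝ) * p ^ k * (1 - p) ^ (j - k)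
      ≤ ∑ j ∈ Finset.range (k + N), (j.choose k : ℝ) * p ^ k * (1 - p) ^ (j - k) :=
        Finset.sum_le_sum_of_subset_of_nonneg
          (Finset.range_subset_range.2 (by omega)) (fun i _ _ => by positivity)
    _ = p ^ k * ∑ i ∈ Finset.range N, ((i + k).choose k : ℝ) * (1 - p) ^ i := by
        rw [Finset.sum_range_add, Finset.sum_eq_zero, zero_add, Finset.mul_sum]
        · refine Finset.sum_congr rfl fun i _ => ?_
          rw [Nat.add_sub_cancel_left, Nat.add_comm k i]
          ring
        · intro j hj
          simp [Nat.choose_eq_zero_of_lt (Finset.mem_range.1 hj)]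
    _ ≤ p ^ k * (1 / p ^ (k + 1)) := by gcongr
    _ = 1 / p := by
        rw [pow_succ]
        field_simp

lemma sum_binomial_weight_eq_one (p : ℝ) (j : ℕ) :
    ∑ k ∈ Finset.range (j + 1), (j.choose k : ℝ) * p ^ k * (1 - p) ^ (j - k) = 1 := by
  have h := add_pow p (1 - p) j
  rw [add_sub_cancel, one_pow] at h
  exact (Finset.sum_congr rfl fun k _ => by ring).trans h.symm

lemma P_bounds (q m n : ℕ) (hq : 1 ≤ q) (hqm : q ≤ m) (hn : m ≤ n) :
    1 - (q : ℝ) / m ≤ P n m q ∧ P n m q ≤ 1 := by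
  have hm0 : (0 : ℝ) < m := by exact_mod_cast (by omega : 0 < m)
  have hn0 : (0 : ℝ) < n := by exact_mod_cast (by omega : 0 < n)
  unfold P
  set p : ℝ := (m : ℝ) / n with hpdef
  have hp : 0 < p := by positivity
  have hp1 : p ≤ 1 := (div_le_one hn0).2 (by exact_mod_cast hn)
  have hr : 0 ≤ 1 - p := by linarith
  constructor
  · -- The terms with `j < q` are empty sums, so the outer sum may start at `j = 0`.
    have hext : ∑ j ∈ Finset.Icc q n, ∑ k ∈ Finset.Icc q j,
          (j.choose k : ℝ) * p ^ k * (1 - p) ^ (j - k)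
        = ∑ j ∈ Finset.range (n + 1), ∑ k ∈ Finset.Icc q j,
          (j.choose k : ℝ) * p ^ k * (1 - p) ^ (j - k) := by
      refine Finset.sum_subset (fun j hj => ?_) (fun j hj hj' => ?_)
      · simp only [Finset.mem_Icc, Finset.mem_range] at *
        omega
      · simp only [Finset.mem_Icc, Finset.mem_range] at *
        rw [Finset.Icc_eq_empty (by omega), Finset.sum_empty]
    have htails : ∀ j : ℕ,
        1 ≤ ∑ k ∈ Finset.Icc q j, (j.choose k : ℝ) * p ^ k * (1 - p) ^ (j - k)
          + ∑ k ∈ Finset.range q, (j.choose k : ℝ) * p ^ k * (1 - p) ^ (j - k) := by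
      intro j
      rw [← Finset.sum_union]
      · refine (sum_binomial_weight_eq_one p j).symm.trans_le ?_
        refine Finset.sum_le_sum_of_subset_of_nonneg (fun k hk => ?_)
          (fun k _ _ => by positivity)
        simp only [Finset.mem_union, Finset.mem_Icc, Finset.mem_range] at *
        omega
      · rw [Finset.disjoint_left]
        intro k hk hk'
        simp only [Finset.mem_Icc, Finset.mem_range] at *
        omega
    have hsum := Finset.sum_le_sum (s := Finset.range (n + 1)) (fun j _ => htails j)
    have hlow : ∑ j ∈ Finset.range (n + 1), ∑ k ∈ Finset.range q,
        (j.choose k : ℝ) * p ^ k * (1 - p) ^ (j - k) ≤ q * (1 / p) := by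
      rw [Finset.sum_comm]
      refine (Finset.sum_le_sum fun k _ => sum_binomial_weight_le p hp hp1 k (n + 1)).trans ?_
      simp
    rw [Finset.sum_add_distrib, ← hext] at hsum
    simp only [Finset.sum_const, Finset.card_range, nsmul_eq_mul, mul_one, Nat.cast_add,
      Nat.cast_one] at hsum
    have hqp : (q : ℝ) * (1 / p) = n * (q / m) := by
      rw [hpdef]
      field_simp
    rw [one_div_mul_eq_div, le_div_iff₀ hn0]
    linarith
  · have hone : ∀ j ∈ Finset.Icc q n,
        ∑ k ∈ Finset.Icc q j, (j.choose k : ℝ) * p ^ k * (1 - p) ^ (j - k) ≤ 1 := by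
      intro j _
      refine le_of_le_of_eq ?_ (sum_binomial_weight_eq_one p j)
      refine Finset.sum_le_sum_of_subset_of_nonneg (fun k hk => ?_)
        (fun k _ _ => by positivity)
      simp only [Finset.mem_Icc, Finset.mem_range] at *
      omega
    have hsum := Finset.sum_le_sum hone
    have hcard : ((n + 1 - q : ℕ) : ℝ) ≤ n := by exact_mod_cast (by omega : n + 1 - q ≤ n)
    simp only [Finset.sum_const, Nat.card_Icc, nsmul_eq_mul, mul_one] at hsum
    rw [one_div_mul_eq_div, div_le_one hn0]
    linarith

/-- For all integers `1 ≤ q ≤ m`, the limit inferior as `n → ∞` of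
`P(n,m,q)` is at least `1 − q/m`. -/
theorem stmt5 (q m : ℕ) (hq : 1 ≤ q) (hqm : q ≤ m) :
    1 - (q : ℝ) / m ≤ Filter.liminf (fun n : ℕ => P n m q) Filter.atTop := by
  have hev : ∀ᶠ n : ℕ in Filter.atTop, 1 - (q : ℝ) / m ≤ P n m q ∧ P n m q ≤ 1 :=
    (Filter.eventually_ge_atTop m).mono fun n hn => P_bounds q m n hq hqm hn
  have hbdd : Filter.IsBoundedUnder (· ≤ ·) Filter.atTop (fun n : ℕ => P n m q) :=
    Filter.isBoundedUnder_of_eventually_le (hev.mono fun _ h => h.2)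
  exact Filter.le_liminf_of_le hbdd.isCoboundedUnder_ge (hev.mono fun _ h => h.1)
end

section
/- For all integers 1 ≤ q ≤ m ≤ n, P(n,m,q) ≥ 1 − q/m. In particular, writing q = αm with α ∈ (0,1], the probability that a randomly sampled subspace is useful is bounded below by 1 − α. -/
/-!
Toss a coin with success probability `p = m/n`, and let `X_j` be the number of successes in the
first `j` tosses, so that `n · P(n,m,q) = ∑_{j ≤ n} Pr(X_j ≥ q)`. The complementary sum is
`∑_{k < q} ∑_{j ≤ n} Pr(X_j = k)`, and the inner sum is at most `1/p`, the expected number of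
times `j` at which the count of successes equals `k` (a negative binomial series,
`sum_binom_le`). Hence `n · P(n,m,q) ≥ n + 1 - q n / m`, which even exceeds the claimed bound by
one. The argument is direct: it needs neither monotonicity in `n` nor a limit.
-/

open Filter Finset

/-- The probability of exactly `k` successes in `j` independent trials with success
probability `p`; it is `0` for `k > j` because the binomial coefficient vanishes. -/
noncomputable def binomProb (p : ℝ) (j k : ℕ) : ℝ :=
  (j.choose k : ℝ) * p ^ k * (1 - p) ^ (j - k)

lemma binomProb_nonneg {p : ℝ} (h0 : 0 < p) (h1 : p ≤ 1) (j k : ℕ) : 0 ≤ binomProb p j k := by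
  have : 0 ≤ 1 - p := by linarith
  unfold binomProb
  positivity

lemma binomProb_eq_zero (p : ℝ) {j k : ℕ} (h : j < k) : binomProb p j k = 0 := by
  simp [binomProb, Nat.choose_eq_zero_of_lt h]

lemma sum_binomProb (p : ℝ) (j : ℕ) : ∑ k ∈ range (j + 1), binomProb p j k = 1 := by
  have h := add_pow p (1 - p) j
  rw [add_sub_cancel, one_pow] at h
  rw [h]
  exact sum_congr rfl fun k _ => by unfold binomProb; ring

/-- The expected time spent with exactly `k` successes is at most `1/p`, by comparison with
the full series `∑ C(i+k,k) (1-p)^i = 1 / p^(k+1)`. -/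
lemma sum_binom_le {p : ℝ} (h0 : 0 < p) (h1 : p ≤ 1) (N k : ℕ) :
    ∑ j ∈ range N, binomProb p j k ≤ 1 / p := by
  have hr : ‖1 - p‖ < 1 := by
    rw [Real.norm_eq_abs, abs_lt]
    constructor <;> linarith
  have hs := (hasSum_choose_mul_geometric_of_norm_lt_one k hr).mul_left (p ^ k)
  have hr0 : 0 ≤ 1 - p := by linarith
  calc ∑ j ∈ range N, binomProb p j k
      ≤ ∑ j ∈ range (k + N), binomProb p j k :=
        sum_le_sum_of_subset_of_nonneg (range_mono (Nat.le_add_left N k))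
          fun j _ _ => binomProb_nonneg h0 h1 j k
    _ = ∑ i ∈ range N, p ^ k * (((i + k).choose k : ℝ) * (1 - p) ^ i) := by
        rw [sum_range_add, sum_eq_zero fun j hj => binomProb_eq_zero p (mem_range.1 hj), zero_add]
        refine sum_congr rfl fun i _ => ?_
        rw [binomProb, add_comm k i, Nat.add_sub_cancel]
        ring
    _ ≤ p ^ k * (1 / (1 - (1 - p)) ^ (k + 1)) :=
        sum_le_hasSum _ (fun i _ => by positivity) hs
    _ = 1 / p := by
        rw [sub_sub_cancel]
        field_simp
        ring

/-- Complementary events `X_j ≥ q` and `X_j < q`; valid also for `j < q`, where the first sum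
is empty. -/
lemma sum_tail_eq (p : ℝ) (q j : ℕ) :
    ∑ k ∈ Icc q j, binomProb p j k = 1 - ∑ k ∈ range q, binomProb p j k := by
  rw [← sum_binomProb p j]
  rcases le_or_gt q j with h | h
  · rw [← Finset.sum_range_add_sum_Ico _ (show q ≤ j + 1 by omega), add_sub_cancel_left]
    rfl
  · rw [Icc_eq_empty (by omega), sum_empty, eq_comm, sub_eq_zero]
    refine sum_subset (range_mono h) fun k _ hk => binomProb_eq_zero p ?_
    rw [mem_range] at hk
    omega

/-- For all integers `1 ≤ q ≤ m ≤ n`, `P(n,m,q) ≥ 1 − q/m`.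
In particular, writing `q = αm` with `α ∈ (0,1]`, the probability that a randomly sampled
subspace is useful is bounded below by `1 − α`. -/
theorem stmt6 (n m q : ℕ) (hq : 1 ≤ q) (hqm : q ≤ m) (hmn : m ≤ n) :
    P n m q ≥ 1 - (q : ℝ) / m ∧
      ∀ α : ℝ, 0 < α → α ≤ 1 → (q : ℝ) = α * m → P n m q ≥ 1 - α := by
  have hm : (0 : ℝ) < m := by exact_mod_cast (by omega : 0 < m)
  have hn : (0 : ℝ) < n := by exact_mod_cast (by omega : 0 < n)
  have hp0 : (0 : ℝ) < (m : ℝ) / n := by positivity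
  have hp1 : (m : ℝ) / n ≤ 1 := by
    rw [div_le_one hn]
    exact_mod_cast hmn
  have main : P n m q ≥ 1 - (q : ℝ) / m := by
    -- The times `j < q` contribute nothing, so the outer sum may start at `0`.
    have hP : P n m q = (1 / (n : ℝ)) *
        ∑ j ∈ range (n + 1), ∑ k ∈ Icc q j, binomProb ((m : ℝ) / n) j k := by
      unfold P
      congr 1
      refine sum_subset (fun j hj => ?_) fun j hj hj' => ?_
      · simp only [mem_Icc, mem_range] at hj ⊢
        omega
      · simp only [mem_Icc, mem_range] at hj hj'
        rw [Icc_eq_empty (by omega), sum_empty]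
    have hlow : ∑ j ∈ range (n + 1), ∑ k ∈ range q, binomProb ((m : ℝ) / n) j k
        ≤ q * (n / m) := by
      rw [sum_comm]
      refine (sum_le_sum fun k _ => sum_binom_le hp0 hp1 (n + 1) k).trans_eq ?_
      simp
    rw [hP]
    simp_rw [sum_tail_eq]
    rw [sum_sub_distrib, sum_const, card_range, nsmul_eq_mul, mul_one]
    push_cast
    calc 1 - (q : ℝ) / m = 1 / n * (n - q * (n / m)) := by field_simp
      _ ≤ _ := by gcongr; linarith
  refine ⟨main, fun α _ _ hα => ?_⟩
  rwa [hα, mul_div_cancel_right₀ _ hm.ne'] at main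
end

section
/- Let c > 1 be a real number, define g(p) = p(1−p)·( log 2 + log p − log(1/c + p) ) for p ∈ (0,1), and define F : ℝ → ℝ by F(x) = g( e^x / (e^x + c − 1) ). Then F(0) = 0, F is twice differentiable at 0, F'(0) = (c−1)^2 / (2c^3), and F''(0) = 3(c−3)(c−1)^2 / (4c^4). -/
/-!
Write `p(x) = e^x / (e^x + c - 1)`. The softmax satisfies the logistic equation `p' = p (1 - p)`,
so by the chain rule `F' = p (1 - p) g'(p)` on all of `ℝ`, and `F''` is obtained by differentiating
this as a function of `p` and multiplying by `p (1 - p)` once more. At `x = 0` we have `p = 1/c`,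
where the logarithmic factor `log 2 + log p - log (1/c + p)` of `g` vanishes; only rational
expressions in `c` remain.
-/

open Filter Finset

/-- The function `g(p) = p(1−p)(log 2 + log p − log(1/c + p))` from Appendix D of the paper. -/
noncomputable def g (c p : ℝ) : ℝ :=
  p * (1 - p) * (Real.log 2 + Real.log p - Real.log (1 / c + p))

/-- The diagonal case `k = l`: `F(x) = g(e^x / (e^x + c − 1))`, where
`e^x/(e^x + c − 1)` is the softmax prediction after perturbing the weight `w_{(t,k)}`. -/
noncomputable def F (c x : ℝ) : ℝ :=
  g c (Real.exp x / (Real.exp x + c - 1))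

theorem softmax_pos (c : ℝ) (hc : 1 < c) (x : ℝ) : 0 < Real.exp x / (Real.exp x + c - 1) :=
  div_pos (Real.exp_pos x) (by linarith [Real.exp_pos x])

/-- The softmax solves the logistic equation `p' = p (1 - p)`. -/
theorem hasDerivAt_softmax (c : ℝ) (hc : 1 < c) (x : ℝ) :
    HasDerivAt (fun x => Real.exp x / (Real.exp x + c - 1))
      (Real.exp x / (Real.exp x + c - 1) * (1 - Real.exp x / (Real.exp x + c - 1))) x := by
  have h0 : Real.exp x + c - 1 ≠ 0 := by linarith [Real.exp_pos x]
  have he := Real.hasDerivAt_exp x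
  refine (he.div ((he.add_const c).sub_const 1) h0).congr_deriv ?_
  field_simp

theorem hasDerivAt_logFactor (c : ℝ) (hc : 1 < c) (p : ℝ) (hp : 0 < p) :
    HasDerivAt (fun p => Real.log 2 + Real.log p - Real.log (1 / c + p))
      (p⁻¹ - (1 / c + p)⁻¹) p := by
  have h1 : 1 / c + p ≠ 0 := by positivity
  refine (((Real.hasDerivAt_log hp.ne').const_add (Real.log 2)).sub
    (((hasDerivAt_id p).const_add (1 / c)).log h1)).congr_deriv ?_
  simp

theorem hasDerivAt_mul_one_sub (p : ℝ) :
    HasDerivAt (fun p : ℝ => p * (1 - p)) (1 - 2 * p) p := by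
  refine ((hasDerivAt_id p).mul ((hasDerivAt_id p).const_sub 1)).congr_deriv ?_
  simp
  ring

/-- The derivative of `F`, written as a function of `p` in place of `x`: that is,
`F'(x) = dF c (p(x))` with `dF c p = p (1 - p) g'(p)`. -/
noncomputable def dF (c p : ℝ) : ℝ :=
  p * (1 - p) * ((1 - 2 * p) * (Real.log 2 + Real.log p - Real.log (1 / c + p)) +
    p * (1 - p) * (p⁻¹ - (1 / c + p)⁻¹))

theorem hasDerivAt_F (c : ℝ) (hc : 1 < c) (x : ℝ) :
    HasDerivAt (F c) (dF c (Real.exp x / (Real.exp x + c - 1))) x := by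
  have hp := softmax_pos c hc x
  have hg := (hasDerivAt_mul_one_sub _).mul (hasDerivAt_logFactor c hc _ hp)
  refine (HasDerivAt.comp x hg (hasDerivAt_softmax c hc x)).congr_deriv ?_
  unfold dF
  ring

theorem logFactor_inv (c : ℝ) (hc : 1 < c) :
    Real.log 2 + Real.log (1 / c) - Real.log (1 / c + 1 / c) = 0 := by
  have h : (1 / c) ≠ 0 := by positivity
  rw [← two_mul, Real.log_mul two_ne_zero h, sub_self]

theorem hasDerivAt_dF (c : ℝ) (hc : 1 < c) :
    HasDerivAt (dF c) (3 * (c - 3) * (c - 1) / (4 * c ^ 2)) (1 / c) := by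
  have hp : 0 < 1 / c := by positivity
  have h2 : 1 / c + 1 / c ≠ 0 := by positivity
  have hu := hasDerivAt_mul_one_sub (1 / c)
  have hl := hasDerivAt_logFactor c hc _ hp
  have hs : HasDerivAt (fun p : ℝ => 1 - 2 * p) (-2) (1 / c) := by
    refine (((hasDerivAt_id (1 / c)).const_mul 2).const_sub 1).congr_deriv ?_
    simp
  have hr : HasDerivAt (fun p : ℝ => p⁻¹ - (1 / c + p)⁻¹)
      (-((1 / c) ^ 2)⁻¹ - -1 / (1 / c + 1 / c) ^ 2) (1 / c) :=
    (hasDerivAt_inv hp.ne').sub (((hasDerivAt_id (1 / c)).const_add (1 / c)).fun_inv h2)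
  refine (hu.mul ((hs.mul hl).add (hu.mul hr))).congr_deriv ?_
  simp only [Pi.add_apply, Pi.mul_apply, logFactor_inv c hc]
  field_simp
  ring

/-- For real `c > 1`: `F(0) = 0`, `F` is twice differentiable at `0`,
`F'(0) = (c−1)²/(2c³)`, and `F''(0) = 3(c−3)(c−1)²/(4c⁴)`. -/
theorem stmt13 (c : ℝ) (hc : 1 < c) :
    F c 0 = 0 ∧ HasDerivAt (F c) ((c - 1) ^ 2 / (2 * c ^ 3)) 0 ∧
      HasDerivAt (deriv (F c)) (3 * (c - 3) * (c - 1) ^ 2 / (4 * c ^ 4)) 0 := by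
  have hc0 : c ≠ 0 := by positivity
  have hp0 : Real.exp 0 / (Real.exp 0 + c - 1) = 1 / c := by simp
  refine ⟨?_, ?_, ?_⟩
  · rw [F, g, hp0, logFactor_inv c hc, mul_zero]
  · refine (hasDerivAt_F c hc 0).congr_deriv ?_
    rw [hp0, dF, logFactor_inv c hc]
    field_simp
    ring
  · have hd : deriv (F c) = fun x => dF c (Real.exp x / (Real.exp x + c - 1)) :=
      funext fun x => (hasDerivAt_F c hc x).deriv
    rw [hd]
    have h := hasDerivAt_dF c hc
    rw [← hp0] at h
    refine (HasDerivAt.comp 0 h (hasDerivAt_softmax c hc 0)).congr_deriv ?_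
    rw [hp0]
    field_simp
end
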